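/- Let L be a symmetric positive semidefinite real n×n matrix such that I − L is also positive semidefinite, let P = I − L, and let E(H) = trace(Hᵀ L H). Let λ₀ be a real number with 0 < λ₀ ≤ 1 such that every nonzero eigenvalue of L is at least λ₀. Then for every real n×d matrix X, every natural number l, and every real α with 0 ≤ α ≤ 1, E(αX + (1−α)P^l X) ≤ α² E(X) + (1 − α²) · trace(Xᵀ L P^l X). -/

import Mathlib

open Matrix BigOperators

/-!
Write `B(X, Y) = trace(Xᴴ L Y)`. When `B(X, Y) = B(Y, X)`,
`α² B(X, X) + (1 - α²) B(X, Y) - B(αX + (1 - α)Y, αX + (1 - α)Y) = (1 - α)² (B(X, Y) - B(Y, Y))`.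
For `Y = PˡX` the last factor is the quadratic form at `X` of `L Pˡ (1 - Pˡ)`. Since `L = 1 - P`,
the geometric sum `1 - Pˡ = (∑ i < l, Pⁱ) L` turns this matrix into the sum over `i < l` of the
matrices `L Pˡ⁺ⁱ L`, which are positive semidefinite together with `P`.
-/

section QuadraticIdentity

variable {R M : Type*} [CommRing R] [StarRing R] [AddCommGroup M] [Module R M]

lemma sesqForm_affineCombination_self (B : M →ₗ⋆[R] M →ₗ[R] R) {x y : M} (hxy : B y x = B x y)
    {α : R} (hα : IsSelfAdjoint α) :
    B (α • x + (1 - α) • y) (α • x + (1 - α) • y) =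
      α ^ 2 * B x x + (1 - α ^ 2) * B x y - (1 - α) ^ 2 * (B x y - B y y) := by
  simp only [map_add, map_smulₛₗ, LinearMap.add_apply, LinearMap.smul_apply, map_sub, map_one,
    starRingEnd_apply, hα.star_eq, RingHom.id_apply, smul_eq_mul, hxy]
  ring

lemma sesqForm_affineCombination_self_le [PartialOrder R] [StarOrderedRing R]
    (B : M →ₗ⋆[R] M →ₗ[R] R) {x y : M} (hxy : B y x = B x y) (hle : B y y ≤ B x y)
    {α : R} (hα : IsSelfAdjoint α) :
    B (α • x + (1 - α) • y) (α • x + (1 - α) • y) ≤ α ^ 2 * B x x + (1 - α ^ 2) * B x y := by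
  have hsq : 0 ≤ (1 - α) ^ 2 := ((IsSelfAdjoint.one R).sub hα).sq_nonneg
  rw [sesqForm_affineCombination_self B hxy hα]
  exact sub_le_self _ (mul_nonneg hsq (sub_nonneg.2 hle))

end QuadraticIdentity

lemma one_sub_mul_pow_mul_one_sub_pow {A : Type*} [Ring A] (a : A) (k l : ℕ) :
    (1 - a) * a ^ k * (1 - a ^ l) = ∑ i ∈ Finset.range l, (1 - a) * a ^ (k + i) * (1 - a) := by
  simp only [← geom_sum_mul_neg a l, ← Finset.sum_mul, ← Finset.mul_sum, pow_add, mul_assoc]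

lemma posSemidef_one_sub_mul_pow_mul_one_sub_pow {R n : Type*} [Ring R] [StarRing R]
    [PartialOrder R] [StarOrderedRing R] [Fintype n] [DecidableEq n] {P : Matrix n n R}
    (hP : P.PosSemidef) (k l : ℕ) :
    ((1 - P) * P ^ k * (1 - P ^ l)).PosSemidef := by
  have hL : (1 - P)ᴴ = 1 - P := (isHermitian_one.sub hP.isHermitian).eq
  have hterm (i : ℕ) : ((1 - P) * P ^ (k + i) * (1 - P)).PosSemidef := by
    have h := (hP.pow (k + i)).conjTranspose_mul_mul_same (1 - P)
    rwa [hL] at h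
  rw [one_sub_mul_pow_mul_one_sub_pow]
  exact posSemidef_sum _ fun i _ => hterm i

section DirichletForm

variable {R n m : Type*} [CommRing R] [StarRing R] [Fintype n] [Fintype m]

/-- The sesquilinear form `(X, Y) ↦ trace(Xᴴ L Y)`, whose diagonal `dirichletForm L H H` is the
Dirichlet energy `E(H)`. It is conjugate-linear in the first argument. -/
def dirichletForm (L : Matrix n n R) : Matrix n m R →ₗ⋆[R] Matrix n m R →ₗ[R] R :=
  LinearMap.mk₂'ₛₗ (starRingEnd R) (RingHom.id R) (fun X Y => (Xᴴ * L * Y).trace)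
    (fun _ _ _ => by simp [Matrix.add_mul]) (fun _ _ _ => by simp [starRingEnd_apply])
    (fun _ _ _ => by simp [Matrix.mul_add]) (fun _ _ _ => by simp)

lemma dirichletForm_apply (L : Matrix n n R) (X Y : Matrix n m R) :
    dirichletForm L X Y = (Xᴴ * L * Y).trace :=
  rfl

lemma dirichletForm_self_nonneg [PartialOrder R] [StarOrderedRing R] {L : Matrix n n R}
    (hL : L.PosSemidef) (X : Matrix n m R) : 0 ≤ dirichletForm L X X :=
  (hL.conjTranspose_mul_mul_same X).trace_nonneg

lemma dirichletForm_mul_left_eq_mul_right {L Q : Matrix n n R} (hQ : Q.IsHermitian)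
    (hLQ : Commute L Q) (X Y : Matrix n m R) :
    dirichletForm L (Q * X) Y = dirichletForm L X (Q * Y) := by
  have hQL : Q * L = L * Q := hLQ.eq.symm
  simp only [dirichletForm_apply, conjTranspose_mul, hQ.eq, Matrix.mul_assoc Xᴴ, hQL,
    ← Matrix.mul_assoc L Q Y]

lemma dirichletForm_mul_self_le [PartialOrder R] [StarOrderedRing R] [DecidableEq n]
    {L Q : Matrix n n R} (hQ : Q.IsHermitian) (hLQ : Commute L Q)
    (hLQQ : (L * Q * (1 - Q)).PosSemidef) (X : Matrix n m R) :
    dirichletForm L (Q * X) (Q * X) ≤ dirichletForm L X (Q * X) := by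
  have hdiff : dirichletForm L X (Q * X) - dirichletForm L (Q * X) (Q * X) =
      dirichletForm (L * Q * (1 - Q)) X X := by
    rw [dirichletForm_mul_left_eq_mul_right hQ hLQ, ← map_sub]
    simp only [dirichletForm_apply, Matrix.mul_assoc, Matrix.mul_sub, Matrix.sub_mul,
      Matrix.one_mul]
  exact sub_nonneg.1 (hdiff ▸ dirichletForm_self_nonneg hLQQ X)

theorem gpnn_energy_le_mixed_general [PartialOrder R] [StarOrderedRing R] [DecidableEq n]
    {L P : Matrix n n R} (hPL : P = 1 - L) (hP : P.PosSemidef) (X : Matrix n m R) (l : ℕ)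
    {α : R} (hα : IsSelfAdjoint α) :
    dirichletForm L (α • X + (1 - α) • (P ^ l * X)) (α • X + (1 - α) • (P ^ l * X)) ≤
      α ^ 2 * dirichletForm L X X + (1 - α ^ 2) * dirichletForm L X (P ^ l * X) := by
  obtain rfl : L = 1 - P := by rw [hPL, sub_sub_cancel]
  have hQ : (P ^ l).IsHermitian := hP.isHermitian.pow l
  have hLQ : Commute (1 - P) (P ^ l) :=
    ((Commute.one_left P).sub_left (Commute.refl P)).pow_right l
  have hLQQ := posSemidef_one_sub_mul_pow_mul_one_sub_pow hP l l
  exact sesqForm_affineCombination_self_le _ (dirichletForm_mul_left_eq_mul_right hQ hLQ X X)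
    (dirichletForm_mul_self_le hQ hLQ hLQQ X) hα

end DirichletForm

/-- `E(αX + (1−α)P^l X) ≤ α² E(X) + (1 − α²)·trace(Xᵀ L P^l X)`. -/
theorem gpnn_energy_le_mixed (n d : ℕ) (L : Matrix (Fin n) (Fin n) ℝ)
    (hL : L.PosSemidef) (hIL : ((1 : Matrix (Fin n) (Fin n) ℝ) - L).PosSemidef)
    (P : Matrix (Fin n) (Fin n) ℝ) (hP : P = 1 - L)
    (lam0 : ℝ) (hlam0 : 0 < lam0) (hlam1 : lam0 ≤ 1)
    (hspec : ∀ μ ∈ spectrum ℝ L, μ ≠ 0 → lam0 ≤ μ)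
    (X : Matrix (Fin n) (Fin d) ℝ) (l : ℕ) (α : ℝ) (hα0 : 0 ≤ α) (hα1 : α ≤ 1) :
    ((α • X + (1 - α) • (P ^ l * X))ᵀ * L *
        (α • X + (1 - α) • (P ^ l * X))).trace ≤
      α ^ 2 * (Xᵀ * L * X).trace +
        (1 - α ^ 2) * (Xᵀ * L * (P ^ l * X)).trace := by
  simpa only [dirichletForm_apply, conjTranspose_eq_transpose_of_trivial] using
    gpnn_energy_le_mixed_general hP (hP ▸ hIL) X l (IsSelfAdjoint.all α)
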